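/- Let S be a ring and X a left S-module. Then X is totally reflexive if and only if the following four conditions hold: (1) both the left S-module X and the right S-module Hom_S(X,S) have finitely generated projective resolutions; (2) X is reflexive, i.e. the evaluation map ev_X : X → Hom_{Sᵒᵖ}(Hom_S(X,S), S) is bijective; (3) Ext^n_S(X,S) = 0 for all n ≥ 1; (4) Ext^n_{Sᵒᵖ}(Hom_S(X,S), S) = 0 for all n ≥ 1. -/

import Mathlib

/- STATEMENT 6: A left S-module X is totally reflexive iff (1) both X and its dual
Hom_S(X,S) have finitely generated projective resolutions, (2) X is reflexive,
(3) Ext^n_S(X,S) = 0 for n ≥ 1, and (4) Ext^n_{Sᵒᵖ}(Hom_S(X,S), S) = 0 for n ≥ 1. -/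

open CategoryTheory

universe u v

/-- The dual of a linear map: precomposition `Hom_S(N,S) → Hom_S(M,S)`, a map of
right `S`-modules. -/
def dualComp (S : Type u) [Ring S] {M N : Type v} [AddCommGroup M] [AddCommGroup N]
    [Module S M] [Module S N] (f : M →ₗ[S] N) :
    (N →ₗ[S] S) →ₗ[Sᵐᵒᵖ] (M →ₗ[S] S) where
  toFun g := g.comp f
  map_add' _ _ := by ext x; rfl
  map_smul' _ _ := by ext x; rfl

/-- A left `S`-module `X` is totally reflexive if there is an unbounded acyclic complex
`P•` of finitely generated projective `S`-modules whose dual complex `Hom_S(P•,S)` of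
right `S`-modules is also acyclic, such that `X` is isomorphic to the first cocycle
`Z¹(P•) = ker (P¹ → P²)`. -/
def IsTotallyReflexive (S : Type u) [Ring S] (X : Type v) [AddCommGroup X]
    [Module S X] : Prop :=
  ∃ (P : ℤ → ModuleCat.{v} S) (d : ∀ n : ℤ, P n →ₗ[S] P (n + 1)),
    (∀ n, Module.Finite S (P n)) ∧
    (∀ n, Module.Projective S (P n)) ∧
    (∀ n, LinearMap.range (d n) = LinearMap.ker (d (n + 1))) ∧
    (∀ n, LinearMap.range (dualComp S (d (n + 1))) = LinearMap.ker (dualComp S (d n))) ∧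
    Nonempty (X ≃ₗ[S] LinearMap.ker (d 1))

/-- A left `S`-module `X` has a finitely generated projective resolution:
an exact sequence `⋯ → P¹ → P⁰ → X → 0` with each `Pⁱ` finitely generated projective. -/
def HasFGProjRes (S : Type u) [Ring S] (X : Type v) [AddCommGroup X] [Module S X] : Prop :=
  ∃ (P : ℕ → ModuleCat.{v} S) (d : ∀ n : ℕ, P (n + 1) →ₗ[S] P n) (ε : P 0 →ₗ[S] X),
    (∀ n, Module.Finite S (P n)) ∧
    (∀ n, Module.Projective S (P n)) ∧
    Function.Surjective ε ∧
    LinearMap.range (d 0) = LinearMap.ker ε ∧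
    ∀ n, LinearMap.range (d (n + 1)) = LinearMap.ker (d n)

/-- The evaluation map `X → Hom_{Sᵒᵖ}(Hom_S(X,S), S)`, `x ↦ (f ↦ f x)`. -/
def evalFun (S : Type u) [Ring S] (X : Type v) [AddCommGroup X] [Module S X] :
    X → ((X →ₗ[S] S) →ₗ[Sᵐᵒᵖ] S) := fun x =>
  { toFun := fun f => f x
    map_add' := fun _ _ => rfl
    map_smul' := fun _ _ => rfl }

/-- A left `S`-module is reflexive if the evaluation map into its double dual is bijective. -/
def IsReflexiveMod (S : Type u) [Ring S] (X : Type v) [AddCommGroup X] [Module S X] : Prop :=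
  Function.Bijective (evalFun S X)

/-!
A totally acyclic complex, cut at the image `X` of `P⁰ → P¹`, consists of a resolution and a
coresolution of `X` by finitely generated projectives, both staying exact under `Hom_S(-, S)`;
conversely two such halves can be spliced. A projective resolution stays exact under `Hom_S(-, S)`
iff `Ext^n_S(X, S) = 0` for `n ≥ 1`. The coresolutions are the duals of the projective resolutions
of `Hom_S(X, S)`: since finitely generated projectives are reflexive, double dualizing does not
affect exactness, so the dual of such a resolution is exact iff `Ext^n(Hom_S(X, S), S) = 0` for
`n ≥ 1`, and it coresolves the bidual of `X`, hence `X` itself exactly when `X` is reflexive.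
-/

section Resolutions

variable {R : Type*} [Ring R] {P : ℕ → Type*} [∀ n, AddCommGroup (P n)] [∀ n, Module R (P n)]
  {M : Type*} [AddCommGroup M] [Module R M]

/-- The augmented complex `⋯ → P 1 → P 0 → M → 0` with augmentation `ε` is exact. -/
structure IsResolution (d : ∀ n, P (n + 1) →ₗ[R] P n) (ε : P 0 →ₗ[R] M) : Prop where
  surjective : Function.Surjective ε
  exact_zero : Function.Exact (d 0) ε
  exact_succ : ∀ n, Function.Exact (d (n + 1)) (d n)

/-- The coaugmented complex `0 → M → P 0 → P 1 → ⋯` with coaugmentation `ι` is exact. -/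
structure IsCoresolution (ι : M →ₗ[R] P 0) (d : ∀ n, P n →ₗ[R] P (n + 1)) : Prop where
  injective : Function.Injective ι
  exact_zero : Function.Exact ι (d 0)
  exact_succ : ∀ n, Function.Exact (d n) (d (n + 1))

theorem hasFGProjRes_iff_exists_isResolution {S : Type u} [Ring S] {X : Type v} [AddCommGroup X]
    [Module S X] :
    HasFGProjRes S X ↔
      ∃ (P : ℕ → ModuleCat.{v} S) (d : ∀ n, P (n + 1) →ₗ[S] P n) (ε : P 0 →ₗ[S] X),
        (∀ n, Module.Finite S (P n)) ∧ (∀ n, Module.Projective S (P n)) ∧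
          IsResolution (P := fun n ↦ P n) d ε := by
  refine exists_congr fun P ↦ exists_congr fun d ↦ exists_congr fun ε ↦ and_congr_right fun _ ↦
    and_congr_right fun _ ↦ ⟨fun ⟨hε, h₀, h⟩ ↦ ⟨hε, ?_, fun n ↦ ?_⟩, fun h ↦ ⟨h.surjective, ?_, ?_⟩⟩
  · exact LinearMap.exact_iff.mpr h₀.symm
  · exact LinearMap.exact_iff.mpr (h n).symm
  · exact (LinearMap.exact_iff.mp h.exact_zero).symm
  · exact fun n ↦ (LinearMap.exact_iff.mp (h.exact_succ n)).symm

end Resolutions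

section Dual

variable {A B D : Type*} [Ring A] [Ring B] [AddCommGroup D] [Module A D] [Module B D]
  [SMulCommClass A B D]
  {L M N : Type*} [AddCommGroup L] [Module A L] [AddCommGroup M] [Module A M]
  [AddCommGroup N] [Module A N]

variable (B D) in
theorem exact_lcomp_of_exact_of_surjective {f : L →ₗ[A] M} {g : M →ₗ[A] N}
    (hfg : Function.Exact f g) (hg : Function.Surjective g) :
    Function.Exact (g.lcomp B D) (f.lcomp B D) := by
  refine fun φ ↦ ⟨fun hφ ↦ ?_, ?_⟩
  · refine ⟨(LinearMap.range f).liftQ φ (LinearMap.range_le_ker_iff.mpr hφ) ∘ₗ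
      (hfg.linearEquivOfSurjective hg).symm.toLinearMap, ?_⟩
    ext x
    simp
  · rintro ⟨ψ, rfl⟩
    rw [LinearMap.lcomp_apply', LinearMap.lcomp_apply', LinearMap.comp_assoc,
      hfg.linearMap_comp_eq_zero, LinearMap.comp_zero]

theorem IsResolution.isCoresolution_lcomp_iff {P : ℕ → Type*} [∀ n, AddCommGroup (P n)]
    [∀ n, Module A (P n)] {d : ∀ n, P (n + 1) →ₗ[A] P n} {ε : P 0 →ₗ[A] M}
    (h : IsResolution d ε) :
    IsCoresolution (ε.lcomp B D) (fun n ↦ (d n).lcomp B D) ↔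
      ∀ n, Function.Exact ((d n).lcomp B D) ((d (n + 1)).lcomp B D) :=
  ⟨fun h' ↦ h'.exact_succ, fun h' ↦ ⟨LinearMap.lcomp_injective_of_surjective ε h.surjective,
    exact_lcomp_of_exact_of_surjective B D h.exact_zero h.surjective, h'⟩⟩

variable (A B D M)

theorem finite_linearMap [Module.Finite A M] [Module.Projective A M] [Module.Finite B D] :
    Module.Finite B (M →ₗ[A] D) := by
  obtain ⟨n, s, i, -, -, hsi⟩ := Module.Finite.exists_comp_eq_id_of_projective A M
  have : Module.Finite B ((Fin n → A) →ₗ[A] D) :=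
    .equiv (LinearEquiv.piRing A D (Fin n) B).symm
  refine .of_surjective (i.lcomp B D) fun f ↦ ⟨f ∘ₗ s, ?_⟩
  rw [LinearMap.lcomp_apply', LinearMap.comp_assoc, hsi, LinearMap.comp_id]

theorem projective_linearMap [Module.Finite A M] [Module.Projective A M] [Module.Projective B D] :
    Module.Projective B (M →ₗ[A] D) := by
  obtain ⟨n, s, i, -, -, hsi⟩ := Module.Finite.exists_comp_eq_id_of_projective A M
  have : Module.Projective B ((Fin n → A) →ₗ[A] D) :=
    .of_equiv' <| (DFinsupp.linearEquivFunOnFintype (R := B) (M := fun _ : Fin n ↦ D)).trans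
      (LinearEquiv.piRing A D (Fin n) B).symm
  refine .of_split (s.lcomp B D) (i.lcomp B D) (LinearMap.ext fun f ↦ ?_)
  change (f ∘ₗ s) ∘ₗ i = f
  rw [LinearMap.comp_assoc, hsi, LinearMap.comp_id]

end Dual

section Ext

variable {R : Type u} [Ring R] {P : ℕ → Type u} [∀ n, AddCommGroup (P n)] [∀ n, Module R (P n)]
  {M : Type u} [AddCommGroup M] [Module R M] {d : ∀ n, P (n + 1) →ₗ[R] P n} {ε : P 0 →ₗ[R] M}

namespace IsResolution

/-- The deleted complex `⋯ → P 1 → P 0` of a resolution. -/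
noncomputable def chainComplex (h : IsResolution d ε) : ChainComplex (ModuleCat.{u} R) ℕ :=
  ChainComplex.of (fun n ↦ ModuleCat.of R (P n)) (fun n ↦ ModuleCat.ofHom (d n)) fun n ↦
    ModuleCat.hom_ext (h.exact_succ n).linearMap_comp_eq_zero

theorem chainComplex_d (h : IsResolution d ε) (n : ℕ) :
    h.chainComplex.d (n + 1) n = ModuleCat.ofHom (d n) :=
  ChainComplex.of_d (fun n ↦ ModuleCat.of R (P n)) (fun n ↦ ModuleCat.ofHom (d n)) n

theorem exactAt_chainComplex (h : IsResolution d ε) (n : ℕ) :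
    h.chainComplex.ExactAt (n + 1) := by
  rw [HomologicalComplex.exactAt_iff' _ (n + 1 + 1) (n + 1) n (by simp) (by simp),
    ShortComplex.ShortExact.moduleCat_exact_iff_function_exact]
  change Function.Exact (h.chainComplex.d _ _) (h.chainComplex.d _ _)
  rw [chainComplex_d, chainComplex_d]
  exact h.exact_succ n

theorem chainComplex_d_comp_augmentation (h : IsResolution d ε) :
    h.chainComplex.d 1 0 ≫ (ModuleCat.ofHom ε : ModuleCat.of R (P 0) ⟶ ModuleCat.of R M) = 0 := by
  rw [chainComplex_d]
  exact ModuleCat.hom_ext h.exact_zero.linearMap_comp_eq_zero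

/-- The augmentation of a resolution, as a chain map to `M` concentrated in degree `0`. -/
noncomputable def augmentation (h : IsResolution d ε) :
    h.chainComplex ⟶ (ChainComplex.single₀ _).obj (ModuleCat.of R M) :=
  (ChainComplex.toSingle₀Equiv _ _).symm ⟨ModuleCat.ofHom ε, h.chainComplex_d_comp_augmentation⟩

theorem quasiIso_augmentation (h : IsResolution d ε) : QuasiIso h.augmentation where
  quasiIsoAt
    | 0 => by
      rw [ChainComplex.quasiIsoAt₀_iff, ShortComplex.quasiIso_iff_of_zeros' _ rfl rfl rfl]
      let T : ShortComplex (ModuleCat.{u} R) :=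
        .mk (ModuleCat.ofHom (d 0)) (ModuleCat.ofHom ε)
          (ModuleCat.hom_ext h.exact_zero.linearMap_comp_eq_zero)
      have hT : T.Exact ∧ Epi T.g :=
        ⟨(ShortComplex.ShortExact.moduleCat_exact_iff_function_exact T).mpr h.exact_zero,
          (ModuleCat.epi_iff_surjective _).mpr h.surjective⟩
      refine (ShortComplex.exact_and_epi_g_iff_of_iso (S₂ := T) ?_).mpr hT
      refine ShortComplex.isoMk (Iso.refl _) (Iso.refl _) (Iso.refl _) ?_ ?_
      · exact (Category.id_comp _).trans
          ((h.chainComplex_d 0).symm.trans (Category.comp_id _).symm)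
      · exact (Category.id_comp _).trans ((ChainComplex.toSingle₀Equiv_symm_apply_f_zero
          (C := h.chainComplex) (X := ModuleCat.of R M) (ModuleCat.ofHom ε)
          h.chainComplex_d_comp_augmentation).symm.trans (Category.comp_id _).symm)
    | n + 1 => (quasiIsoAt_iff_exactAt' _ _ (ChainComplex.exactAt_succ_single_obj _ n)).mpr
        (h.exactAt_chainComplex n)

/-- A resolution by projective modules, as a projective resolution in the category of modules. -/
noncomputable def projectiveResolution [hP : ∀ n, Module.Projective R (P n)]
    (h : IsResolution d ε) : ProjectiveResolution (ModuleCat.of R M) where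
  complex := h.chainComplex
  projective n := (IsProjective.iff_projective (P n)).mp (hP n)
  π := h.augmentation
  quasiIso := h.quasiIso_augmentation

variable [∀ n, Module.Projective R (P n)] {B : Type*} [Ring B] {D : Type u} [AddCommGroup D]
  [Module R D] [Module B D] [SMulCommClass R B D]

theorem subsingleton_ext_succ_iff (h : IsResolution d ε) (n : ℕ) :
    Subsingleton (((Ext ℤ (ModuleCat.{u} R) (n + 1)).obj (Opposite.op (ModuleCat.of R M))).obj
      (ModuleCat.of R D)) ↔
      Function.Exact ((d n).lcomp B D) ((d (n + 1)).lcomp B D) := by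
  rw [← ModuleCat.isZero_iff_subsingleton, (h.projectiveResolution.isoExt (n + 1) _).isZero_iff,
    ← HomologicalComplex.exactAt_iff_isZero_homology,
    HomologicalComplex.exactAt_iff' _ n (n + 1) (n + 1 + 1) (by simp) (by simp),
    ShortComplex.ShortExact.moduleCat_exact_iff_function_exact]
  have comp_d (k : ℕ) (φ : ModuleCat.of R (P k) ⟶ ModuleCat.of R D) :
      ((h.projectiveResolution.complex.linearYonedaObj ℤ (ModuleCat.of R D)).d k (k + 1)) φ =
        (ModuleCat.ofHom (φ.hom ∘ₗ d k) : ModuleCat.of R (P (k + 1)) ⟶ ModuleCat.of R D) :=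
    (congrArg (· ≫ φ) (h.chainComplex_d k) :)
  -- Exactness depends only on the underlying functions, so `B` may be replaced by `ℤ`.
  change _ ↔ Function.Exact ((d n).lcomp ℤ D) ((d (n + 1)).lcomp ℤ D)
  refine (Function.Exact.iff_of_ladder_linearEquiv
    (e₁ := (ModuleCat.homLinearEquiv (S := ℤ) (M := .of R (P n)) (N := .of R D)))
    (e₂ := (ModuleCat.homLinearEquiv (S := ℤ) (M := .of R (P (n + 1))) (N := .of R D)))
    (e₃ := (ModuleCat.homLinearEquiv (S := ℤ) (M := .of R (P (n + 1 + 1))) (N := .of R D)))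
    (LinearMap.ext fun φ ↦ ?_) (LinearMap.ext fun φ ↦ ?_)).symm
  · exact (congrArg ModuleCat.Hom.hom (comp_d n φ)).symm
  · exact (congrArg ModuleCat.Hom.hom (comp_d (n + 1) φ)).symm

theorem isCoresolution_lcomp_iff_subsingleton_ext (h : IsResolution d ε) :
    IsCoresolution (ε.lcomp B D) (fun n ↦ (d n).lcomp B D) ↔
      ∀ n : ℕ, 1 ≤ n → Subsingleton (((Ext ℤ (ModuleCat.{u} R) n).obj
        (Opposite.op (ModuleCat.of R M))).obj (ModuleCat.of R D)) := by
  rw [h.isCoresolution_lcomp_iff]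
  simp only [← h.subsingleton_ext_succ_iff]
  exact ⟨fun H n hn ↦ Nat.sub_add_cancel hn ▸ H (n - 1), fun H n ↦ H (n + 1) n.succ_pos⟩

end IsResolution

end Ext

section Bidual

variable (A B D M : Type*) [Ring A] [Ring B] [AddCommGroup D] [Module A D] [Module B D]
  [SMulCommClass A B D] [SMulCommClass B A D] [AddCommGroup M] [Module A M]

/-- Evaluation into the bidual relative to a bimodule `D` over `A` and `B`. -/
def bidualEval : M →ₗ[A] ((M →ₗ[A] D) →ₗ[B] D) :=
  LinearMap.flip LinearMap.id

theorem exists_dual_basis [Module.Finite A M] [Module.Projective A M] :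
    ∃ (n : ℕ) (e : Fin n → M) (c : Fin n → M →ₗ[A] A), ∀ x, ∑ k, c k x • e k = x := by
  obtain ⟨n, s, i, -, -, hsi⟩ := Module.Finite.exists_comp_eq_id_of_projective A M
  exact ⟨n, fun k ↦ s fun j ↦ if k = j then 1 else 0, fun k ↦ LinearMap.proj k ∘ₗ i, fun x ↦
    (s.pi_apply_eq_sum_univ (i x)).symm.trans (LinearMap.congr_fun hsi x)⟩

variable {A B D M} in
theorem bijective_bidualEval [Module.Finite A M] [Module.Projective A M]
    (h : Function.Bijective (Module.toModuleEnd B D : A →+* Module.End B D)) :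
    Function.Bijective (bidualEval A B D M) := by
  obtain ⟨n, e, c, hec⟩ := exists_dual_basis A M
  let coord (k : Fin n) : D →ₗ[B] (M →ₗ[A] D) :=
    (c k).lcomp B D ∘ₗ (LinearMap.ringLmapEquivSelf A B D).symm.toLinearMap
  have coord_apply (k : Fin n) (y : D) (x : M) : coord k y x = c k x • y := by simp [coord]
  constructor
  · refine (injective_iff_map_eq_zero _).mpr fun x hx ↦ ?_
    have hc (k : Fin n) : c k x = 0 := (map_eq_zero_iff _ h.injective).mp <|
      LinearMap.ext fun y ↦ (coord_apply k y x).symm.trans (LinearMap.congr_fun hx (coord k y))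
    rw [← hec x, Finset.sum_eq_zero fun k _ ↦ by rw [hc, zero_smul]]
  · intro θ
    choose a ha using fun k ↦ h.surjective (θ ∘ₗ coord k)
    have expand (f : M →ₗ[A] D) : ∑ k, coord k (f (e k)) = f := by
      ext x
      rw [LinearMap.sum_apply]
      simp only [coord_apply, ← map_smul, ← map_sum, hec]
    refine ⟨∑ k, a k • e k, LinearMap.ext fun f ↦ ?_⟩
    calc f (∑ k, a k • e k) = ∑ k, a k • f (e k) := by simp only [map_sum, map_smul]
      _ = ∑ k, θ (coord k (f (e k))) :=
        Finset.sum_congr rfl fun k _ ↦ LinearMap.congr_fun (ha k) (f (e k))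
      _ = θ f := by rw [← map_sum, expand]

variable {A B D M}

theorem exact_lcomp_lcomp_iff {L N : Type*} [AddCommGroup L] [Module A L] [AddCommGroup N]
    [Module A N] {f : L →ₗ[A] M} {g : M →ₗ[A] N} (hL : Function.Bijective (bidualEval A B D L))
    (hM : Function.Bijective (bidualEval A B D M))
    (hN : Function.Bijective (bidualEval A B D N)) :
    Function.Exact ((f.lcomp B D).lcomp A D) ((g.lcomp B D).lcomp A D) ↔ Function.Exact f g :=
  Function.Exact.iff_of_ladder_linearEquiv (e₁ := .ofBijective _ hL) (e₂ := .ofBijective _ hM)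
    (e₃ := .ofBijective _ hN) rfl rfl

variable {P : ℕ → Type*} [∀ n, AddCommGroup (P n)] [∀ n, Module A (P n)]

theorem IsCoresolution.bijective_bidualEval {ι : M →ₗ[A] P 0} {d : ∀ n, P n →ₗ[A] P (n + 1)}
    (h : IsCoresolution ι d) (h' : IsCoresolution ((ι.lcomp B D).lcomp A D)
      (fun n ↦ ((d n).lcomp B D).lcomp A D))
    (hP : ∀ n, Function.Bijective (bidualEval A B D (P n))) :
    Function.Bijective (bidualEval A B D M) :=
  AddMonoidHom.bijective_of_bijective_of_injective_of_left_exact ι.toAddMonoidHom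
    (d 0).toAddMonoidHom ((ι.lcomp B D).lcomp A D).toAddMonoidHom
    (((d 0).lcomp B D).lcomp A D).toAddMonoidHom (bidualEval A B D M).toAddMonoidHom
    (bidualEval A B D (P 0)).toAddMonoidHom (bidualEval A B D (P 1)).toAddMonoidHom rfl rfl
    h.exact_zero h'.exact_zero (hP 0) (hP 1).injective h.injective h'.injective

theorem IsCoresolution.comp_bijective {N : Type*} [AddCommGroup N] [Module A N] {ι : M →ₗ[A] P 0}
    {d : ∀ n, P n →ₗ[A] P (n + 1)} (h : IsCoresolution ι d) {e : N →ₗ[A] M}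
    (he : Function.Bijective e) : IsCoresolution (ι ∘ₗ e) d where
  injective := h.injective.comp he.injective
  exact_zero := he.surjective.comp_exact_iff_exact.mpr h.exact_zero
  exact_succ := h.exact_succ

theorem IsResolution.lcomp_lcomp {d : ∀ n, P (n + 1) →ₗ[A] P n} {ε : P 0 →ₗ[A] M}
    (h : IsResolution d ε) (hP : ∀ n, Function.Bijective (bidualEval A B D (P n)))
    {ε' : ((P 0 →ₗ[A] D) →ₗ[B] D) →ₗ[A] M} (hε' : ε' ∘ₗ bidualEval A B D (P 0) = ε) :
    IsResolution (P := fun n ↦ (P n →ₗ[A] D) →ₗ[B] D)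
      (fun n ↦ ((d n).lcomp B D).lcomp A D) ε' where
  surjective := .of_comp (g := bidualEval A B D (P 0)) <| by
    rw [← LinearMap.coe_comp, hε']
    exact h.surjective
  exact_zero := (Function.Exact.iff_of_ladder_linearEquiv (e₁ := .ofBijective _ (hP 1))
    (e₂ := .ofBijective _ (hP 0)) (e₃ := .refl A M) rfl hε').mpr h.exact_zero
  exact_succ n := (exact_lcomp_lcomp_iff (hP _) (hP _) (hP _)).mpr (h.exact_succ n)

end Bidual

section Ring

variable (S : Type u) [Ring S]

/-- `S` is free of rank one as a right module over itself. -/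
def opSelfEquiv : Sᵐᵒᵖ ≃ₗ[Sᵐᵒᵖ] S :=
  { MulOpposite.opAddEquiv.symm with map_smul' := fun _ _ ↦ rfl }

instance finite_op_self : Module.Finite Sᵐᵒᵖ S :=
  .equiv (opSelfEquiv S)

instance projective_op_self : Module.Projective Sᵐᵒᵖ S :=
  .of_equiv (opSelfEquiv S)

variable {S}

theorem bijective_bidualEval_self (M : Type*) [AddCommGroup M] [Module S M] [Module.Finite S M]
    [Module.Projective S M] : Function.Bijective (bidualEval S Sᵐᵒᵖ S M) :=
  bijective_bidualEval (RingEquiv.moduleEndSelfOp S).bijective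

theorem bijective_bidualEval_op (M : Type*) [AddCommGroup M] [Module Sᵐᵒᵖ M]
    [Module.Finite Sᵐᵒᵖ M] [Module.Projective Sᵐᵒᵖ M] :
    Function.Bijective (bidualEval Sᵐᵒᵖ S S M) :=
  bijective_bidualEval (RingEquiv.moduleEndSelf S).bijective

end Ring

section Splice

variable {R : Type*} [Ring R] {K L M N : Type*} [AddCommGroup K] [AddCommGroup L]
  [AddCommGroup M] [AddCommGroup N] [Module R K] [Module R L] [Module R M] [Module R N]

theorem surjective_of_exact_comp {f : M →ₗ[R] N} {g : N →ₗ[R] L} {h : K →ₗ[R] M}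
    (hf : Function.Injective f) (hfg : Function.Exact f g) (hfhg : Function.Exact (f ∘ₗ h) g) :
    Function.Surjective h := by
  intro x
  obtain ⟨y, hy⟩ := (hfhg (f x)).mp (hfg.apply_apply_eq_zero x)
  exact ⟨y, hf hy⟩

theorem exists_comp_eq_of_exact {ι : K →ₗ[R] N} {g : N →ₗ[R] L} {f : M →ₗ[R] N}
    (hι : Function.Injective ι) (hιg : Function.Exact ι g) (hgf : g ∘ₗ f = 0) :
    ∃ ε : M →ₗ[R] K, ι ∘ₗ ε = f := by
  have hf (x : M) : f x ∈ LinearMap.range ι := (hιg (f x)).mp (LinearMap.congr_fun hgf x)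
  refine ⟨(LinearEquiv.ofInjective ι hι).symm.toLinearMap ∘ₗ f.codRestrict _ hf, ?_⟩
  ext x
  exact congrArg Subtype.val ((LinearEquiv.ofInjective ι hι).apply_symm_apply ⟨f x, hf x⟩)

variable {S : Type u} [Ring S]

/-- The terms of the two-sided complex `⋯ → P 1 → P 0 → Q 0 → Q 1 → ⋯`, with `P 0` placed in
degree `0`. -/
def spliceObj (P Q : ℕ → ModuleCat.{v} S) : ℤ → ModuleCat.{v} S
  | Int.ofNat 0 => P 0
  | Int.ofNat (n + 1) => Q n
  | Int.negSucc n => P (n + 1)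

variable {P Q : ℕ → ModuleCat.{v} S}

/-- The differentials of the two-sided complex `⋯ → P 1 → P 0 → Q 0 → Q 1 → ⋯` with connecting map
`m : P 0 → Q 0`. -/
def spliceMap (d : ∀ n, P (n + 1) →ₗ[S] P n) (m : P 0 →ₗ[S] Q 0)
    (δ : ∀ n, Q n →ₗ[S] Q (n + 1)) : ∀ n : ℤ, spliceObj P Q n →ₗ[S] spliceObj P Q (n + 1)
  | Int.ofNat 0 => m
  | Int.ofNat (n + 1) => δ n
  | Int.negSucc 0 => d 0
  | Int.negSucc (n + 1) => d (n + 1)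

variable {d : ∀ n, P (n + 1) →ₗ[S] P n} {m : P 0 →ₗ[S] Q 0} {δ : ∀ n, Q n →ₗ[S] Q (n + 1)}

-- The relation `C` is arbitrary so that this serves both the complex and its dual.
theorem forall_spliceMap
    {C : ∀ {L M N : ModuleCat.{v} S}, (L →ₗ[S] M) → (M →ₗ[S] N) → Prop}
    (hd : ∀ n, C (d (n + 1)) (d n)) (hdm : C (d 0) m) (hmδ : C m (δ 0))
    (hδ : ∀ n, C (δ n) (δ (n + 1))) : ∀ n, C (spliceMap d m δ n) (spliceMap d m δ (n + 1))
  | Int.ofNat 0 => hmδ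
  | Int.ofNat (n + 1) => hδ n
  | Int.negSucc 0 => hdm
  | Int.negSucc 1 => hd 0
  | Int.negSucc (n + 2) => hd (n + 1)

/-- The differentials of the nonpositive half of a two-sided complex, read as a chain complex. -/
def nonposMap {T : ℤ → ModuleCat.{v} S} (t : ∀ n, T n →ₗ[S] T (n + 1)) :
    ∀ n : ℕ, T (Int.negOfNat (n + 1)) →ₗ[S] T (Int.negOfNat n)
  | 0 => t (Int.negSucc 0)
  | n + 1 => t (Int.negSucc (n + 1))

variable {T : ℤ → ModuleCat.{v} S} {t : ∀ n, T n →ₗ[S] T (n + 1)}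

theorem forall_nonposMap
    {C : ∀ {L M N : ModuleCat.{v} S}, (L →ₗ[S] M) → (M →ₗ[S] N) → Prop}
    (ht : ∀ n, C (t n) (t (n + 1))) : ∀ n, C (nonposMap t (n + 1)) (nonposMap t n)
  | 0 => ht (Int.negSucc 1)
  | n + 1 => ht (Int.negSucc (n + 2))

end Splice

section TotallyReflexive

variable {S : Type u} [Ring S] {X : Type v} [AddCommGroup X] [Module S X]

variable (S X) in
/-- `X` has a resolution by finitely generated projective modules which stays exact after
dualizing: the nonpositive half of the totally acyclic complexes that witness total reflexivity. -/
def HasDualExactResolution : Prop :=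
  ∃ (P : ℕ → ModuleCat.{v} S) (d : ∀ n, P (n + 1) →ₗ[S] P n) (ε : P 0 →ₗ[S] X),
    (∀ n, Module.Finite S (P n)) ∧ (∀ n, Module.Projective S (P n)) ∧
      IsResolution (P := fun n ↦ P n) d ε ∧
      IsCoresolution (P := fun n ↦ P n →ₗ[S] S) (dualComp S ε) (fun n ↦ dualComp S (d n))

variable (S X) in
/-- `X` has a coresolution by finitely generated projective modules which stays exact after
dualizing: the positive half of the totally acyclic complexes that witness total reflexivity. -/
def HasDualExactCoresolution : Prop :=
  ∃ (Q : ℕ → ModuleCat.{v} S) (ι : X →ₗ[S] Q 0) (δ : ∀ n, Q n →ₗ[S] Q (n + 1)),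
    (∀ n, Module.Finite S (Q n)) ∧ (∀ n, Module.Projective S (Q n)) ∧
      IsCoresolution (P := fun n ↦ Q n) ι δ ∧
      IsResolution (P := fun n ↦ Q n →ₗ[S] S) (fun n ↦ dualComp S (δ n)) (dualComp S ι)

theorem isTotallyReflexive_iff_exists_image_factorization :
    IsTotallyReflexive S X ↔
      ∃ (T : ℤ → ModuleCat.{v} S) (t : ∀ n, T n →ₗ[S] T (n + 1)) (ε : T 0 →ₗ[S] X)
        (ι : X →ₗ[S] T 1),
        (∀ n, Module.Finite S (T n)) ∧ (∀ n, Module.Projective S (T n)) ∧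
          (∀ n, Function.Exact (t n) (t (n + 1))) ∧
          (∀ n, Function.Exact (dualComp S (t (n + 1))) (dualComp S (t n))) ∧
          Function.Surjective ε ∧ Function.Injective ι ∧ ι ∘ₗ ε = t 0 := by
  constructor
  · rintro ⟨T, t, fin, proj, range_eq_ker, dual_range_eq_ker, ⟨e⟩⟩
    have exact_t (n : ℤ) : Function.Exact (t n) (t (n + 1)) :=
      LinearMap.exact_iff.mpr (range_eq_ker n).symm
    let ι : X →ₗ[S] T 1 := (LinearMap.ker (t 1)).subtype ∘ₗ e.toLinearMap
    have hι : Function.Injective ι := Subtype.val_injective.comp e.injective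
    have hιt : Function.Exact ι (t 1) :=
      e.surjective.comp_exact_iff_exact.mpr (LinearMap.exact_subtype_ker_map _)
    obtain ⟨ε, hιε⟩ : ∃ ε : T 0 →ₗ[S] X, ι ∘ₗ ε = t 0 :=
      exists_comp_eq_of_exact hι hιt (exact_t 0).linearMap_comp_eq_zero
    exact ⟨T, t, ε, ι, fin, proj, exact_t,
      fun n ↦ LinearMap.exact_iff.mpr (dual_range_eq_ker n).symm,
      surjective_of_exact_comp hι hιt (hιε ▸ exact_t 0), hι, hιε⟩
  · rintro ⟨T, t, ε, ι, fin, proj, exact_t, exact_dual, hε, hι, hιε⟩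
    have hιt : Function.Exact ι (t 1) :=
      hε.comp_exact_iff_exact.mp <| by rw [hιε]; exact exact_t 0
    exact ⟨T, t, fin, proj, fun n ↦ (LinearMap.exact_iff.mp (exact_t n)).symm,
      fun n ↦ (LinearMap.exact_iff.mp (exact_dual n)).symm,
      ⟨(LinearEquiv.ofInjective ι hι).trans (.ofEq _ _ (LinearMap.exact_iff.mp hιt).symm)⟩⟩

theorem IsTotallyReflexive.hasDualExactResolution_and_coresolution (h : IsTotallyReflexive S X) :
    HasDualExactResolution S X ∧ HasDualExactCoresolution S X := by
  obtain ⟨T, t, ε, ι, fin, proj, exact_t, exact_dual, hε, hι, hιε⟩ :=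
    isTotallyReflexive_iff_exists_image_factorization.mp h
  have exact_left : Function.Exact (nonposMap t 0) (ι ∘ₗ ε) := by
    rw [hιε]
    exact exact_t (-1)
  have exact_right : Function.Exact (ι ∘ₗ ε) (t 1) := hιε ▸ exact_t 0
  have dual_left : Function.Exact (dualComp S (ι ∘ₗ ε)) (dualComp S (nonposMap t 0)) := by
    rw [hιε]
    exact exact_dual (-1)
  have dual_right : Function.Exact (dualComp S (t 1)) (dualComp S (ι ∘ₗ ε)) :=
    hιε ▸ exact_dual 0
  have res : IsResolution (P := fun n ↦ T (Int.negOfNat n)) (nonposMap t) ε :=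
    ⟨hε, hι.comp_exact_iff_exact.mp exact_left,
      forall_nonposMap (C := fun f g ↦ Function.Exact f g) exact_t⟩
  have dual_res : IsCoresolution (P := fun n ↦ T (Int.negOfNat n) →ₗ[S] S) (dualComp S ε)
      (fun n ↦ dualComp S (nonposMap t n)) :=
    res.isCoresolution_lcomp_iff.mpr <|
      forall_nonposMap (C := fun f g ↦ Function.Exact (dualComp S g) (dualComp S f)) exact_dual
  have cores : IsCoresolution (P := fun n : ℕ ↦ T (Int.ofNat (n + 1))) ι
      (fun n ↦ t (Int.ofNat (n + 1))) :=
    ⟨hι, hε.comp_exact_iff_exact.mp exact_right, fun n ↦ exact_t (Int.ofNat (n + 1))⟩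
  have dual_cores : IsResolution (P := fun n : ℕ ↦ T (Int.ofNat (n + 1)) →ₗ[S] S)
      (fun n ↦ dualComp S (t (Int.ofNat (n + 1)))) (dualComp S ι) :=
    ⟨surjective_of_exact_comp (h := dualComp S ι) dual_res.injective dual_res.exact_zero dual_left,
      dual_res.injective.comp_exact_iff_exact.mp dual_right,
      fun n ↦ exact_dual (Int.ofNat (n + 1))⟩
  exact ⟨⟨fun n ↦ T (Int.negOfNat n), nonposMap t, ε, fun _ ↦ fin _, fun _ ↦ proj _, res, dual_res⟩,
    ⟨fun n ↦ T (Int.ofNat (n + 1)), ι, fun n ↦ t (Int.ofNat (n + 1)), fun _ ↦ fin _,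
      fun _ ↦ proj _, cores, dual_cores⟩⟩

theorem HasDualExactResolution.isTotallyReflexive (h : HasDualExactResolution S X)
    (h' : HasDualExactCoresolution S X) : IsTotallyReflexive S X := by
  obtain ⟨P, d, ε, finP, projP, hε, hε'⟩ := h
  obtain ⟨Q, ι, δ, finQ, projQ, hι, hι'⟩ := h'
  rw [isTotallyReflexive_iff_exists_image_factorization]
  refine ⟨spliceObj P Q, spliceMap d (ι ∘ₗ ε) δ, ε, ι, ?_, ?_, ?_, ?_, hε.surjective,
    hι.injective, rfl⟩
  · rintro ((_ | n) | n)
    exacts [finP 0, finQ n, finP (n + 1)]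
  · rintro ((_ | n) | n)
    exacts [projP 0, projQ n, projP (n + 1)]
  · exact forall_spliceMap (C := fun f g ↦ Function.Exact f g) hε.exact_succ
      (hι.injective.comp_exact_iff_exact.mpr hε.exact_zero)
      (hε.surjective.comp_exact_iff_exact.mpr hι.exact_zero) hι.exact_succ
  · exact forall_spliceMap (C := fun f g ↦ Function.Exact (dualComp S g) (dualComp S f))
      hε'.exact_succ (hι'.surjective.comp_exact_iff_exact.mpr hε'.exact_zero)
      (hε'.injective.comp_exact_iff_exact.mpr hι'.exact_zero) hι'.exact_succ

theorem isTotallyReflexive_iff_hasDualExactResolution :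
    IsTotallyReflexive S X ↔ HasDualExactResolution S X ∧ HasDualExactCoresolution S X :=
  ⟨fun h ↦ h.hasDualExactResolution_and_coresolution, fun h ↦ h.1.isTotallyReflexive h.2⟩

end TotallyReflexive

section Characterization

variable {S : Type u} [Ring S] {X : Type u} [AddCommGroup X] [Module S X]

theorem hasDualExactResolution_iff :
    HasDualExactResolution S X ↔ HasFGProjRes S X ∧
      ∀ n : ℕ, 1 ≤ n → Subsingleton (((Ext ℤ (ModuleCat.{u} S) n).obj
        (Opposite.op (ModuleCat.of S X))).obj (ModuleCat.of S S)) := by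
  rw [hasFGProjRes_iff_exists_isResolution]
  constructor
  · rintro ⟨P, d, ε, finP, projP, hε, hε'⟩
    exact ⟨⟨P, d, ε, finP, projP, hε⟩, hε.isCoresolution_lcomp_iff_subsingleton_ext.mp hε'⟩
  · rintro ⟨⟨P, d, ε, finP, projP, hε⟩, hExt⟩
    exact ⟨P, d, ε, finP, projP, hε,
      (hε.isCoresolution_lcomp_iff_subsingleton_ext (B := Sᵐᵒᵖ)).mpr hExt⟩

theorem hasDualExactCoresolution_iff :
    HasDualExactCoresolution S X ↔ HasFGProjRes Sᵐᵒᵖ (X →ₗ[S] S) ∧ IsReflexiveMod S X ∧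
      ∀ n : ℕ, 1 ≤ n → Subsingleton (((Ext ℤ (ModuleCat.{u} Sᵐᵒᵖ) n).obj
        (Opposite.op (ModuleCat.of Sᵐᵒᵖ (X →ₗ[S] S)))).obj (ModuleCat.of Sᵐᵒᵖ S)) := by
  rw [hasFGProjRes_iff_exists_isResolution]
  constructor
  · rintro ⟨Q, ι, δ, finQ, projQ, hι, hι'⟩
    have finDual (n : ℕ) : Module.Finite Sᵐᵒᵖ (Q n →ₗ[S] S) := finite_linearMap ..
    have projDual (n : ℕ) : Module.Projective Sᵐᵒᵖ (Q n →ₗ[S] S) := projective_linearMap ..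
    have hQ (n : ℕ) : Function.Bijective (bidualEval S Sᵐᵒᵖ S (Q n)) :=
      bijective_bidualEval_self (Q n)
    have bidual : IsCoresolution (P := fun n ↦ (Q n →ₗ[S] S) →ₗ[Sᵐᵒᵖ] S)
        ((dualComp S ι).lcomp S S) (fun n ↦ (dualComp S (δ n)).lcomp S S) :=
      hι'.isCoresolution_lcomp_iff.mpr fun n ↦
        (exact_lcomp_lcomp_iff (hQ _) (hQ _) (hQ _)).mpr (hι.exact_succ n)
    exact ⟨⟨fun n ↦ ModuleCat.of Sᵐᵒᵖ (Q n →ₗ[S] S), _, _, finDual, projDual, hι'⟩,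
      hι.bijective_bidualEval bidual hQ,
      hι'.isCoresolution_lcomp_iff_subsingleton_ext.mp bidual⟩
  · rintro ⟨⟨Q, t, η, finQ, projQ, hη⟩, hX, hExt⟩
    have finDual (n : ℕ) : Module.Finite S (Q n →ₗ[Sᵐᵒᵖ] S) := finite_linearMap ..
    have projDual (n : ℕ) : Module.Projective S (Q n →ₗ[Sᵐᵒᵖ] S) := projective_linearMap ..
    have dual : IsCoresolution (P := fun n ↦ Q n →ₗ[Sᵐᵒᵖ] S) (η.lcomp S S)
        (fun n ↦ (t n).lcomp S S) :=
      hη.isCoresolution_lcomp_iff_subsingleton_ext.mpr hExt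
    exact ⟨fun n ↦ ModuleCat.of S (Q n →ₗ[Sᵐᵒᵖ] S), η.lcomp S S ∘ₗ bidualEval S Sᵐᵒᵖ S X,
      fun n ↦ (t n).lcomp S S, finDual, projDual, dual.comp_bijective hX,
      hη.lcomp_lcomp (fun n ↦ bijective_bidualEval_op (Q n)) rfl⟩

end Characterization

theorem totally_reflexive_iff (S : Type u) [Ring S]
    (X : Type u) [AddCommGroup X] [Module S X] :
    IsTotallyReflexive S X ↔
      ((HasFGProjRes S X ∧ HasFGProjRes Sᵐᵒᵖ (X →ₗ[S] S)) ∧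
       IsReflexiveMod S X ∧
       (∀ n : ℕ, 1 ≤ n → Subsingleton
         (((Ext ℤ (ModuleCat.{u} S) n).obj
            (Opposite.op (ModuleCat.of S X))).obj (ModuleCat.of S S))) ∧
       (∀ n : ℕ, 1 ≤ n → Subsingleton
         (((Ext ℤ (ModuleCat.{u} Sᵐᵒᵖ) n).obj
            (Opposite.op (ModuleCat.of Sᵐᵒᵖ (X →ₗ[S] S)))).obj (ModuleCat.of Sᵐᵒᵖ S)))) := by
  rw [isTotallyReflexive_iff_hasDualExactResolution, hasDualExactResolution_iff,
    hasDualExactCoresolution_iff]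
  tauto
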